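/- For all positive integers n_1,…,n_k, the polytope P_{n_1,…,n_k} ⊂ ℝ^d satisfies: (a) ℤA(P_{n_1,…,n_k}) = ℤ^{d+1}; (b) P_{n_1,…,n_k} has the integer decomposition property, i.e. for every positive integer n and every a ∈ nP_{n_1,…,n_k} ∩ ℤ^d there exist a_1,…,a_n ∈ P_{n_1,…,n_k} ∩ ℤ^d with a = a_1 + ⋯ + a_n; consequently (c) P_{n_1,…,n_k} is normal: ℕA(P_{n_1,…,n_k}) = ℤA(P_{n_1,…,n_k}) ∩ ℝ≥0A(P_{n_1,…,n_k}). -/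

import Mathlib

/-!
STATEMENT 6: (a) `ℤA(P_{n₁,…,n_k}) = ℤ^{d+1}`; (b) `P_{n₁,…,n_k}` has the
integer decomposition property; (c) `P_{n₁,…,n_k}` is normal, i.e.
`ℕA = ℤA ∩ ℝ≥0A`.
-/

open scoped NNReal Pointwise

noncomputable section

abbrev blockIdx (k : ℕ) (n : Fin k → ℕ) : Type := (p : Fin k) × Fin (n p)

def intCast {α : Type*} (v : α → ℤ) : α → ℝ := fun i => (v i : ℝ)

def latticeA {α : Type*} (L : Set (α → ℤ)) : Set ((α → ℤ) × ℤ) :=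
  (fun v => (v, (1 : ℤ))) '' L

def prodCast {α : Type*} (x : (α → ℤ) × ℤ) : (α → ℝ) × ℝ :=
  (intCast x.1, (x.2 : ℝ))

/-- Normality: `ℕA(P) = ℤA(P) ∩ ℝ≥0A(P)`. -/
def IsNormalPolytope {α : Type*} (L : Set (α → ℤ)) : Prop :=
  ∀ x : (α → ℤ) × ℤ,
    x ∈ AddSubmonoid.closure (latticeA L) ↔
      x ∈ AddSubgroup.closure (latticeA L) ∧
        prodCast x ∈ Submodule.span ℝ≥0 (prodCast '' latticeA L)

/-- The lattice point `i₁ + ⋯ + i_k ∈ B_{n₁,…,n_k}`. -/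
def chooseVecInt {k : ℕ} {n : Fin k → ℕ} (c : ∀ p, Fin (n p)) : blockIdx k n → ℤ :=
  fun j => if c j.1 = j.2 then 1 else 0

/-- The lattice point set `V_{n₁,…,n_k} = {0} ∪ B_d ∪ B_{n₁,…,n_k}`. -/
def latticeSet (k : ℕ) (n : Fin k → ℕ) : Set (blockIdx k n → ℤ) :=
  {0} ∪ {v | ∃ j : blockIdx k n, v = Pi.single j 1} ∪
    {v | ∃ c : ∀ p, Fin (n p), v = chooseVecInt c}

/-- The polytope `P_{n₁,…,n_k} = conv(V_{n₁,…,n_k}) ⊆ ℝ^d`. -/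
def polyP (k : ℕ) (n : Fin k → ℕ) : Set (blockIdx k n → ℝ) :=
  convexHull ℝ (intCast '' latticeSet k n)

/-!
A vector `a ∈ ℕ^d` whose block sums are all at least `T` splits off `T` elements of
`B_{n₁,…,n_k}`, each using one unit from every block; what remains has coordinate sum
`∑ a - k T` and is a sum of that many unit vectors. So `a` is a sum of at most `∑ a - (k - 1) T`
points of `V_{n₁,…,n_k}`, and zeros pad this to any larger number. Taking for `T` the smallest
block sum, `∑ a - (k - 1) T ≤ m` is one of the inequalities
`∑ x - (k - 1) ∑_{i} x_{q,i} ≤ m`, which are linear and hold on `m P` because they hold at the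
vertices. Since `0` and the unit vectors lie in `V_{n₁,…,n_k}`, all of `ℤ^{d+1}` is generated, and
integer decomposition gives normality because the cone over `P` at height `m` is `m P`.
-/

section Lattice

variable {α : Type*} {L : Set (α → ℤ)}

/-- The integer decomposition property of the polytope `conv L`, in the form where `L` is its set
of lattice points: every lattice point of `m • conv L`, `m > 0`, is a sum of `m` elements of `L`. -/
def HasIntegerDecomposition (L : Set (α → ℤ)) : Prop :=
  ∀ m : ℕ, 0 < m → ∀ a : α → ℤ, intCast a ∈ (m : ℝ) • convexHull ℝ (intCast '' L) →
    ∃ f : Fin m → (α → ℤ), (∀ i, f i ∈ L) ∧ a = ∑ i, f i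

lemma mk_one_mem_closure_latticeA {v : α → ℤ} (hv : v ∈ L) :
    (v, (1 : ℤ)) ∈ AddSubmonoid.closure (latticeA L) :=
  AddSubmonoid.subset_closure ⟨v, hv, rfl⟩

lemma sum_mem_closure_latticeA {m : ℕ} {f : Fin m → α → ℤ} (hf : ∀ i, f i ∈ L) :
    (∑ i, f i, (m : ℤ)) ∈ AddSubmonoid.closure (latticeA L) := by
  have key : (∑ i, f i, (m : ℤ)) = ∑ i, (f i, (1 : ℤ)) := by
    ext <;> simp [Prod.fst_sum, Prod.snd_sum]
  rw [key]
  exact sum_mem fun i _ => mk_one_mem_closure_latticeA (hf i)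

lemma exists_sum_eq_of_mem_closure_latticeA {a : α → ℤ} {m : ℕ}
    (ha : (a, (m : ℤ)) ∈ AddSubmonoid.closure (latticeA L)) :
    ∃ f : Fin m → α → ℤ, (∀ i, f i ∈ L) ∧ a = ∑ i, f i := by
  suffices h : ∀ x ∈ AddSubmonoid.closure (latticeA L), ∃ l : ℕ, x.2 = l ∧
      ∃ f : Fin l → α → ℤ, (∀ i, f i ∈ L) ∧ x.1 = ∑ i, f i by
    obtain ⟨l, hl, hf⟩ := h _ ha
    obtain rfl := Int.ofNat.inj hl
    exact hf
  intro x hx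
  induction hx using AddSubmonoid.closure_induction with
  | mem x hx =>
    obtain ⟨v, hv, rfl⟩ := hx
    exact ⟨1, by simp, fun _ => v, fun _ => hv, by simp⟩
  | zero => exact ⟨0, by simp, Fin.elim0, fun i => i.elim0, by simp⟩
  | add x y _ _ hx hy =>
    obtain ⟨l, hl, f, hf, hxf⟩ := hx
    obtain ⟨r, hr, g, hg, hyg⟩ := hy
    refine ⟨l + r, by simp [hl, hr], Fin.append f g, fun i => ?_, by simp [Fin.sum_univ_add, *]⟩
    induction i using Fin.addCases <;> simp [hf, hg]

end Lattice

section Generation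

variable {α : Type*} [DecidableEq α] {L : Set (α → ℤ)}

lemma mk_eq_sum_zsmul_single_add [Fintype α] (a : α → ℤ) (z : ℤ) :
    (a, z) = ∑ j, a j • ((Pi.single j 1 : α → ℤ), (1 : ℤ)) +
      (z - ∑ j, a j) • ((0 : α → ℤ), (1 : ℤ)) := by
  ext i
  · simp [Prod.fst_sum, Finset.sum_apply, Pi.single_apply]
  · simp [Prod.snd_sum]

lemma closure_latticeA_eq_top [Finite α] (h_zero : 0 ∈ L) (h_single : ∀ j, Pi.single j 1 ∈ L) :
    AddSubgroup.closure (latticeA L) = ⊤ := by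
  have := Fintype.ofFinite α
  have mem {v : α → ℤ} (hv : v ∈ L) : (v, (1 : ℤ)) ∈ AddSubgroup.closure (latticeA L) :=
    AddSubgroup.subset_closure ⟨v, hv, rfl⟩
  refine eq_top_iff.2 fun ⟨a, z⟩ _ => ?_
  rw [mk_eq_sum_zsmul_single_add a z]
  exact add_mem (sum_mem fun j _ => zsmul_mem (mem (h_single j)) _) (zsmul_mem (mem h_zero) _)

lemma zsmul_mem_of_nonneg {G : Type*} [AddGroup G] {M : AddSubmonoid G} {x : G} (hx : x ∈ M)
    {z : ℤ} (hz : 0 ≤ z) : z • x ∈ M := by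
  lift z to ℕ using hz
  rw [natCast_zsmul]
  exact nsmul_mem hx z

lemma mem_closure_latticeA_of_sum_le [Fintype α] (h_zero : 0 ∈ L)
    (h_single : ∀ j, Pi.single j 1 ∈ L) {a : α → ℤ} (ha : 0 ≤ a) {z : ℤ}
    (hz : ∑ j, a j ≤ z) : (a, z) ∈ AddSubmonoid.closure (latticeA L) := by
  rw [mk_eq_sum_zsmul_single_add a z]
  exact add_mem
    (sum_mem fun j _ => zsmul_mem_of_nonneg (mk_one_mem_closure_latticeA (h_single j)) (ha j))
    (zsmul_mem_of_nonneg (mk_one_mem_closure_latticeA h_zero) (sub_nonneg.2 hz))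

end Generation

section Cone

lemma mem_smul_convexHull_of_mem_span {E : Type*} [AddCommGroup E] [Module ℝ E] {S : Set E}
    (hS : S.Nonempty) {y : E × ℝ}
    (hy : y ∈ Submodule.span ℝ≥0 ((fun v => (v, (1 : ℝ))) '' S)) :
    0 ≤ y.2 ∧ y.1 ∈ y.2 • convexHull ℝ S := by
  induction hy using Submodule.span_induction with
  | mem y hy =>
    obtain ⟨v, hv, rfl⟩ := hy
    simpa using subset_convexHull ℝ S hv
  | zero => simp [Set.zero_smul_set (hS.convexHull (𝕜 := ℝ))]
  | add x y _ _ hx hy =>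
    refine ⟨add_nonneg hx.1 hy.1, ?_⟩
    rw [Prod.snd_add, (convex_convexHull ℝ S).add_smul hx.1 hy.1]
    exact Set.add_mem_add hx.2 hy.2
  | smul c y _ hy =>
    refine ⟨mul_nonneg c.2 hy.1, ?_⟩
    change (c : ℝ) • y.1 ∈ ((c : ℝ) • y.2) • convexHull ℝ S
    rw [smul_assoc]
    exact Set.smul_mem_smul_set hy.2

variable {α : Type*} {L : Set (α → ℤ)}

lemma prodCast_zero : prodCast (0 : (α → ℤ) × ℤ) = 0 := by
  ext <;> simp [prodCast, intCast]

lemma prodCast_add (x y : (α → ℤ) × ℤ) : prodCast (x + y) = prodCast x + prodCast y := by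
  ext <;> simp [prodCast, intCast]

lemma prodCast_mem_span_of_mem_closure {x : (α → ℤ) × ℤ}
    (hx : x ∈ AddSubmonoid.closure (latticeA L)) :
    prodCast x ∈ Submodule.span ℝ≥0 (prodCast '' latticeA L) := by
  induction hx using AddSubmonoid.closure_induction with
  | mem x hx => exact Submodule.subset_span ⟨x, hx, rfl⟩
  | zero => exact prodCast_zero (α := α) ▸ zero_mem _
  | add x y _ _ hx hy => exact prodCast_add x y ▸ add_mem hx hy

lemma prodCast_image_latticeA :
    prodCast '' latticeA L = (fun v => (v, (1 : ℝ))) '' (intCast '' L) := by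
  simp [latticeA, prodCast, Set.image_image]

lemma closure_latticeA_le :
    AddSubmonoid.closure (latticeA L) ≤ (AddSubgroup.closure (latticeA L)).toAddSubmonoid :=
  AddSubmonoid.closure_le.2 AddSubgroup.subset_closure

theorem HasIntegerDecomposition.isNormalPolytope (hL : HasIntegerDecomposition L)
    (hne : L.Nonempty) : IsNormalPolytope L := by
  refine fun ⟨a, z⟩ => ⟨fun hx => ⟨closure_latticeA_le hx, prodCast_mem_span_of_mem_closure hx⟩,
    fun ⟨_, hx⟩ => ?_⟩
  rw [prodCast_image_latticeA] at hx
  obtain ⟨hz, ha⟩ := mem_smul_convexHull_of_mem_span (hne.image _) hx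
  lift z to ℕ using Int.cast_nonneg_iff.1 hz with m
  simp only [prodCast, Int.cast_natCast] at ha
  obtain rfl | hm := m.eq_zero_or_pos
  · have a_eq_zero : a = 0 := by
      rw [Nat.cast_zero, Set.zero_smul_set ((hne.image _).convexHull (𝕜 := ℝ))] at ha
      exact funext fun i => Int.cast_eq_zero.1 (congrFun ha i)
    subst a_eq_zero
    exact zero_mem _
  · obtain ⟨f, hf, rfl⟩ := hL m hm a ha
    exact sum_mem_closure_latticeA hf

end Cone

section ValidInequalities

lemma le_mul_of_mem_smul_convexHull {E : Type*} [AddCommGroup E] [Module ℝ E] {S : Set E}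
    (ψ : E →ₗ[ℝ] ℝ) {r t : ℝ} (hS : ∀ s ∈ S, ψ s ≤ r) (ht : 0 ≤ t) {x : E}
    (hx : x ∈ t • convexHull ℝ S) : ψ x ≤ t * r := by
  obtain ⟨y, hy, rfl⟩ := hx
  have hyr : ψ y ≤ r := convexHull_min hS (convex_halfSpace_le ψ.isLinear r) hy
  simpa using mul_le_mul_of_nonneg_left hyr ht

variable {α : Type*} [Finite α]

lemma exists_linearMap_intCast_eq (φ : (α → ℤ) →ₗ[ℤ] ℤ) :
    ∃ ψ : (α → ℝ) →ₗ[ℝ] ℝ, ∀ v, ψ (intCast v) = φ v := by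
  classical
  have := Fintype.ofFinite α
  refine ⟨∑ i, (φ fun j => if i = j then 1 else 0 : ℝ) • LinearMap.proj i, fun v => ?_⟩
  rw [φ.pi_apply_eq_sum_univ v]
  simp [intCast, mul_comm]

lemma le_mul_of_intCast_mem_smul_convexHull {L : Set (α → ℤ)} (φ : (α → ℤ) →ₗ[ℤ] ℤ) {r : ℤ}
    (hL : ∀ v ∈ L, φ v ≤ r) {m : ℕ} {a : α → ℤ}
    (ha : intCast a ∈ (m : ℝ) • convexHull ℝ (intCast '' L)) : φ a ≤ m * r := by
  obtain ⟨ψ, hψ⟩ := exists_linearMap_intCast_eq φ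
  have hψL : ∀ s ∈ intCast '' L, ψ s ≤ (r : ℝ) := by
    rintro _ ⟨v, hv, rfl⟩
    rw [hψ]
    exact_mod_cast hL v hv
  have hψa := le_mul_of_mem_smul_convexHull ψ hψL m.cast_nonneg ha
  rw [hψ] at hψa
  exact_mod_cast hψa

end ValidInequalities

section Blocks

variable {k : ℕ} {n : Fin k → ℕ}

lemma zero_mem_latticeSet : 0 ∈ latticeSet k n := Or.inl (Or.inl rfl)

lemma single_mem_latticeSet (j : blockIdx k n) : Pi.single j 1 ∈ latticeSet k n :=
  Or.inl (Or.inr ⟨j, rfl⟩)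

lemma chooseVecInt_mem_latticeSet (c : ∀ p, Fin (n p)) : chooseVecInt c ∈ latticeSet k n :=
  Or.inr ⟨c, rfl⟩

lemma nonneg_of_mem_latticeSet {v : blockIdx k n → ℤ} (hv : v ∈ latticeSet k n) : 0 ≤ v := by
  obtain (rfl | ⟨j, rfl⟩) | ⟨c, rfl⟩ := hv
  · exact le_rfl
  · exact Pi.single_nonneg.2 zero_le_one
  · intro j
    simp only [chooseVecInt]
    split_ifs <;> simp

lemma sum_chooseVecInt_block (c : ∀ p, Fin (n p)) (p : Fin k) :
    ∑ i, chooseVecInt c ⟨p, i⟩ = 1 := by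
  simp [chooseVecInt]

lemma sum_chooseVecInt (c : ∀ p, Fin (n p)) : ∑ j, chooseVecInt c j = k := by
  simp [Fintype.sum_sigma, sum_chooseVecInt_block]

/-- The linear functional `x ↦ ∑ x - (k - 1) ∑_i x_{q,i}`, which is at most `1` on
`P_{n₁,…,n_k}`. -/
def blockExcess (q : Fin k) : (blockIdx k n → ℤ) →ₗ[ℤ] ℤ :=
  ∑ j, LinearMap.proj j - ((k : ℤ) - 1) • ∑ i, LinearMap.proj ⟨q, i⟩

lemma blockExcess_apply (q : Fin k) (x : blockIdx k n → ℤ) :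
    blockExcess q x = ∑ j, x j - ((k : ℤ) - 1) * ∑ i, x ⟨q, i⟩ := by
  simp [blockExcess]

lemma blockExcess_le_one_of_mem_latticeSet (q : Fin k) {v : blockIdx k n → ℤ}
    (hv : v ∈ latticeSet k n) : blockExcess q v ≤ 1 := by
  have hv_nonneg := nonneg_of_mem_latticeSet hv
  rw [blockExcess_apply]
  obtain (rfl | ⟨j, rfl⟩) | ⟨c, rfl⟩ := hv
  · simp
  · have k_sub_one_nonneg : (0 : ℤ) ≤ k - 1 := by have := q.pos; omega
    rw [Finset.sum_pi_single']
    simpa using mul_nonneg k_sub_one_nonneg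
      (Finset.sum_nonneg fun i _ => hv_nonneg (⟨q, i⟩ : blockIdx k n))
  · rw [sum_chooseVecInt, sum_chooseVecInt_block]
    linarith

lemma exists_chooseVecInt_le {a : blockIdx k n → ℤ} (ha : 0 ≤ a)
    (hpos : ∀ p, 0 < ∑ i, a ⟨p, i⟩) : ∃ c : ∀ p, Fin (n p), chooseVecInt c ≤ a := by
  have exists_pos (p : Fin k) : ∃ i, 0 < a ⟨p, i⟩ := by
    by_contra! h_nonpos
    exact (hpos p).not_ge (Finset.sum_nonpos fun i _ => h_nonpos i)
  choose c hc using exists_pos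
  refine ⟨c, fun ⟨p, i⟩ => ?_⟩
  simp only [chooseVecInt]
  split_ifs with hi
  · exact hi ▸ hc p
  · exact ha _

lemma mem_closure_latticeA_of_le_block_sum (T : ℕ) {a : blockIdx k n → ℤ} {m : ℤ} (ha : 0 ≤ a)
    (hT : ∀ p, T ≤ ∑ i, a ⟨p, i⟩) (hm : ∑ j, a j - ((k : ℤ) - 1) * T ≤ m) :
    (a, m) ∈ AddSubmonoid.closure (latticeA (latticeSet k n)) := by
  induction T generalizing a m with
  | zero =>
    exact mem_closure_latticeA_of_sum_le zero_mem_latticeSet single_mem_latticeSet ha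
      (by simpa using hm)
  | succ T ih =>
    push_cast at hT hm
    obtain ⟨c, hc⟩ := exists_chooseVecInt_le ha fun p => by linarith [hT p]
    have rest_mem : (a - chooseVecInt c, m - 1) ∈
        AddSubmonoid.closure (latticeA (latticeSet k n)) := by
      refine ih (sub_nonneg.2 hc) (fun p => ?_) ?_ <;>
        simp only [Pi.sub_apply, Finset.sum_sub_distrib, sum_chooseVecInt, sum_chooseVecInt_block]
      · linarith [hT p]
      · linarith
    simpa using add_mem rest_mem (mk_one_mem_closure_latticeA (chooseVecInt_mem_latticeSet c))

lemma mem_closure_latticeA_of_blockExcess_le (hk : 0 < k) {a : blockIdx k n → ℤ} {m : ℤ}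
    (ha : 0 ≤ a) (hm : ∀ q, blockExcess q a ≤ m) :
    (a, m) ∈ AddSubmonoid.closure (latticeA (latticeSet k n)) := by
  have : Nonempty (Fin k) := ⟨⟨0, hk⟩⟩
  obtain ⟨q, hq⟩ := Finite.exists_min fun p : Fin k => ∑ i, a ⟨p, i⟩
  have block_sum_nonneg : 0 ≤ ∑ i, a ⟨q, i⟩ := Finset.sum_nonneg fun i _ => ha _
  obtain ⟨T, hT⟩ := Int.eq_ofNat_of_zero_le block_sum_nonneg
  refine mem_closure_latticeA_of_le_block_sum T ha (fun p => hT ▸ hq p) ?_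
  simpa only [blockExcess_apply, hT] using hm q

theorem hasIntegerDecomposition_latticeSet (hk : 0 < k) :
    HasIntegerDecomposition (latticeSet k n) := by
  intro m _ a ha
  have a_nonneg : 0 ≤ a := fun j => by
    simpa using le_mul_of_intCast_mem_smul_convexHull (r := 0) (-LinearMap.proj j)
      (fun v hv => by simpa using nonneg_of_mem_latticeSet hv j) ha
  have a_excess (q : Fin k) : blockExcess q a ≤ m := by
    simpa using le_mul_of_intCast_mem_smul_convexHull (blockExcess q)
      (fun v hv => blockExcess_le_one_of_mem_latticeSet q hv) ha
  exact exists_sum_eq_of_mem_closure_latticeA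
    (mem_closure_latticeA_of_blockExcess_le hk a_nonneg a_excess)

end Blocks

theorem stmt_6 (k : ℕ) (hk : 0 < k) (n : Fin k → ℕ) (hn : ∀ p, 0 < n p) :
    -- (a) `ℤA(P_{n₁,…,n_k}) = ℤ^{d+1}`
    AddSubgroup.closure (latticeA (latticeSet k n)) = ⊤ ∧
    -- (b) the integer decomposition property
    (∀ m : ℕ, 0 < m → ∀ a : blockIdx k n → ℤ,
      intCast a ∈ (m : ℝ) • polyP k n →
        ∃ f : Fin m → (blockIdx k n → ℤ),
          (∀ i, f i ∈ latticeSet k n) ∧ a = ∑ i, f i) ∧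
    -- (c) normality
    IsNormalPolytope (latticeSet k n) :=
  have idp := hasIntegerDecomposition_latticeSet hk
  ⟨closure_latticeA_eq_top zero_mem_latticeSet single_mem_latticeSet, idp,
    idp.isNormalPolytope ⟨0, zero_mem_latticeSet⟩⟩

end
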